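/- Let p ∈ Ω be a T-periodic point whose minimal period n_p is greater than 1. Then the spectrum σ(H̃_p) of the operator H̃_p has at least one open gap contained in [−1,1]: there exist real numbers α, β with −1 ≤ α < β ≤ 1 such that α ∈ σ(H̃_p), β ∈ σ(H̃_p), and the open interval (α, β) is disjoint from σ(H̃_p). -/

import Mathlib

open Real MeasureTheory Filter Topology Matrix Set

noncomputable section

/-- The left shift on bi-infinite sequences: `(Tω)_n = ω_{n+1}`. -/
def shift (ω : ℤ → ℕ) : ℤ → ℕ := fun n => ω (n + 1)

/-- The subshift of finite type: sequences with letters in `{1,…,ℓ}` and all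
transitions `(ω_n, ω_{n+1})` in the allowed set `W`. -/
def SFT (ℓ : ℕ) (W : Set (ℕ × ℕ)) : Set (ℤ → ℕ) :=
  {ω | (∀ n, 1 ≤ ω n ∧ ω n ≤ ℓ) ∧ ∀ n, (ω n, ω (n + 1)) ∈ W}

/-- The cocycle matrix
`A^{(k)}(ω) = √(ω₀/ω₋₁)·[[((ω₀+ω₋₁)/ω₀)·cos k, −ω₋₁/ω₀],[1, 0]]`. -/
def Acoc (k : ℝ) (ω : ℤ → ℕ) : Matrix (Fin 2) (Fin 2) ℝ :=
  Real.sqrt ((ω 0 : ℝ) / (ω (-1) : ℝ)) •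
    !![((ω 0 : ℝ) + (ω (-1) : ℝ)) / (ω 0 : ℝ) * Real.cos k, -((ω (-1) : ℝ) / (ω 0 : ℝ));
       (1 : ℝ), 0]

/-- The iterated cocycle `A_n(ω) = A^{(k)}(T^{n−1}ω)⋯A^{(k)}(ω)` for `n ≥ 0`,
with `A_0(ω) = Id`. -/
def AIter (k : ℝ) (ω : ℤ → ℕ) : ℕ → Matrix (Fin 2) (Fin 2) ℝ
  | 0 => 1
  | n + 1 => Acoc k (shift^[n] ω) * AIter k ω n

end

/-- `ℓ²(ℤ)` over `ℝ`. -/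
abbrev L2Z : Type := lp (fun _ : ℤ => ℝ) 2

/-- `H` is the periodic Jacobi-type operator `H̃_p` on `ℓ²(ℤ)`:
`(H̃_p u)(n) = (p_n/(p_n+p_{n−1}))·u(n+1) + (p_{n−1}/(p_n+p_{n−1}))·u(n−1)`. -/
def IsJacobiOp (p : ℤ → ℕ) (H : L2Z →L[ℝ] L2Z) : Prop :=
  ∀ u : L2Z, ∀ n : ℤ,
    (H u : ∀ _ : ℤ, ℝ) n =
      ((p n : ℝ) / ((p n : ℝ) + (p (n - 1) : ℝ))) * (u : ∀ _ : ℤ, ℝ) (n + 1) +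
      ((p (n - 1) : ℝ) / ((p n : ℝ) + (p (n - 1) : ℝ))) * (u : ∀ _ : ℤ, ℝ) (n - 1)

/-!
A sequence solving the eigenvalue equation `P f = x f` of the walk satisfies
`f (n + 1) = (1 + r n) x f n - r n f (n - 1)`, where `r n = w (n - 1) / w n` and, by periodicity,
the `r n` over one period multiply to `1`. Let `D(x)` be the trace of the transfer matrix over one
period of length `N`. By Cayley–Hamilton, `f (n + N) + f (n - N) = D(x) f n`; read with `P` in place
of `x`, this says that `D(P)` is the sum of the translations by `N` and `-N`. Hence `‖D(P)‖ ≤ 2`,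
and `|D| ≤ 2` on the spectrum of `P`.

The polynomial `D` has degree `N` and leading coefficient `∏ (1 + r n)`. If the `r n` are not all
`1`, AM-GM makes this coefficient larger than `2 ^ N = 2 * 2 ^ (N - 1)`, so the extremality of the
Chebyshev polynomials produces a point of `[-1, 1]` where `|D| > 2`. That point lies outside the
spectrum, whereas `-1` and `1` belong to it: both half-lines have infinite resistance, so no bounded
voltage is generated by a unit source at the origin.
-/

open Polynomial

section CocycleProd

variable {S T : Type*} [Monoid S] [Monoid T]

/-- The ordered product `A (m + j - 1) * ⋯ * A (m + 1) * A m`, which propagates a linear cocycle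
over `ℤ` from the site `m` to the site `m + j`. -/
def cocycleProd (A : ℤ → S) (m : ℤ) : ℕ → S
  | 0 => 1
  | j + 1 => A (m + j) * cocycleProd A m j

lemma cocycleProd_succ' (A : ℤ → S) (m : ℤ) (j : ℕ) :
    cocycleProd A m (j + 1) = cocycleProd A (m + 1) j * A m := by
  induction j with
  | zero => simp [cocycleProd]
  | succ j ih =>
    have hsite : m + ((j + 1 : ℕ) : ℤ) = m + 1 + j := by push_cast; ring
    rw [cocycleProd, ih, cocycleProd, mul_assoc, hsite]

lemma map_cocycleProd {F : Type*} [FunLike F S T] [MonoidHomClass F S T] (φ : F) (A : ℤ → S)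
    (m : ℤ) (j : ℕ) : φ (cocycleProd A m j) = cocycleProd (fun n => φ (A n)) m j := by
  induction j with
  | zero => exact map_one φ
  | succ j ih => rw [cocycleProd, map_mul, ih, cocycleProd]

lemma cocycleProd_eq_prod_range {S : Type*} [CommMonoid S] (A : ℤ → S) (m : ℤ) (j : ℕ) :
    cocycleProd A m j = ∏ i ∈ Finset.range j, A (m + i) := by
  induction j with
  | zero => rfl
  | succ j ih => rw [cocycleProd, ih, Finset.prod_range_succ, mul_comm]

lemma periodic_cocycleProd {A : ℤ → S} {c : ℤ} (hA : Function.Periodic A c) (j : ℕ) :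
    Function.Periodic (fun m => cocycleProd A m j) c := fun m => by
  induction j with
  | zero => rfl
  | succ j ih => simp only [cocycleProd, ih, add_right_comm m c, hA (m + j)]

/-- Moving the starting point by one site conjugates the monodromy, cyclically permuting its
factors. -/
lemma apply_cocycleProd_period_eq {γ : Type*} {φ : S → γ} (hφ : ∀ a b, φ (a * b) = φ (b * a))
    {A : ℤ → S} {N : ℕ} (hA : Function.Periodic A N) (m : ℤ) :
    φ (cocycleProd A m N) = φ (cocycleProd A 0 N) := by
  have hstep : Function.Periodic (fun m => φ (cocycleProd A m N)) (1 : ℤ) := fun m => by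
    cases N with
    | zero => rfl
    | succ k =>
      have hlast : A (m + 1 + k) = A m := by
        rw [← hA m]
        push_cast
        ring_nf
      change φ (A (m + 1 + k) * cocycleProd A (m + 1) k) = φ (cocycleProd A m (k + 1))
      rw [cocycleProd_succ', hlast, hφ]
  simpa using hstep.int_mul_eq m

lemma natDegree_cocycleProd_le {S : Type*} [Semiring S] {A : ℤ → S[X]} {d : ℕ}
    (hA : ∀ n, (A n).natDegree ≤ d) (m : ℤ) (j : ℕ) :
    (cocycleProd A m j).natDegree ≤ d * j := by
  induction j with
  | zero => simp [cocycleProd]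
  | succ j ih => exact (natDegree_mul_le_of_le (hA _) ih).trans_eq (by ring)

lemma coeff_cocycleProd {S : Type*} [Semiring S] {A : ℤ → S[X]} {d : ℕ}
    (hA : ∀ n, (A n).natDegree ≤ d) (m : ℤ) (j : ℕ) :
    (cocycleProd A m j).coeff (d * j) = cocycleProd (fun n => (A n).coeff d) m j := by
  induction j with
  | zero => simp [cocycleProd]
  | succ j ih =>
    rw [cocycleProd, mul_add_one, add_comm (d * j),
      coeff_mul_add_eq_of_natDegree_le (hA _) (natDegree_cocycleProd_le hA m j), ih, cocycleProd]

end CocycleProd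

section TransferMatrix

open scoped Matrix.Module

variable {R : Type*} [CommRing R]

lemma mul_self_add_det_smul_one (A : Matrix (Fin 2) (Fin 2) R) :
    A * A + A.det • 1 = A.trace • A := by
  ext i j
  fin_cases i <;> fin_cases j <;>
    simp [Matrix.mul_apply, Matrix.det_fin_two, Matrix.trace_fin_two] <;> ring

/-- The one-step transfer matrix of the recurrence `f (n + 1) = α n • f n - β n • f (n - 1)`, taking
`![f n, f (n - 1)]` to `![f (n + 1), f n]`. -/
def transferMatrix (α β : ℤ → R) (n : ℤ) : Matrix (Fin 2) (Fin 2) R :=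
  !![α n, -β n; 1, 0]

lemma det_transferMatrix (α β : ℤ → R) (n : ℤ) : (transferMatrix α β n).det = β n := by
  simp [transferMatrix, Matrix.det_fin_two]

lemma periodic_transferMatrix {α β : ℤ → R} {c : ℤ} (hα : Function.Periodic α c)
    (hβ : Function.Periodic β c) : Function.Periodic (transferMatrix α β) c := fun n => by
  rw [transferMatrix, hα, hβ, transferMatrix]

lemma det_cocycleProd_transferMatrix (α β : ℤ → R) (m : ℤ) (j : ℕ) :
    (cocycleProd (transferMatrix α β) m j).det = ∏ i ∈ Finset.range j, β (m + i) := by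
  simp_rw [← Matrix.coe_detMonoidHom, map_cocycleProd, Matrix.coe_detMonoidHom,
    det_transferMatrix, cocycleProd_eq_prod_range]

variable {M : Type*} [AddCommGroup M] [Module R M] {α β : ℤ → R} {f : ℤ → M}

lemma cocycleProd_transferMatrix_smul (hf : ∀ n, f (n + 1) = α n • f n - β n • f (n - 1)) (m : ℤ)
    (j : ℕ) :
    cocycleProd (transferMatrix α β) m j • ![f m, f (m - 1)] = ![f (m + j), f (m + j - 1)] := by
  induction j with
  | zero => simp [cocycleProd]
  | succ j ih =>
    rw [cocycleProd, mul_smul, ih]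
    ext i
    fin_cases i
    · simp [transferMatrix, hf, ← add_assoc, sub_eq_add_neg]
    · simp [transferMatrix, ← add_assoc]

/-- Cayley–Hamilton for the monodromy matrix, whose trace and determinant do not depend on the
base point. -/
lemma recurrence_add_period {N : ℕ} (hα : Function.Periodic α N) (hβ : Function.Periodic β N)
    (hf : ∀ n, f (n + 1) = α n • f n - β n • f (n - 1)) (n : ℤ) :
    f (n + N) + (∏ i ∈ Finset.range N, β i) • f (n - N) =
      (cocycleProd (transferMatrix α β) 0 N).trace • f n := by
  have hper := periodic_transferMatrix hα hβ
  have hdet := apply_cocycleProd_period_eq Matrix.det_mul_comm hper n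
  have htrace := apply_cocycleProd_period_eq Matrix.trace_mul_comm hper n
  rw [det_cocycleProd_transferMatrix α β 0] at hdet
  have hprev := cocycleProd_transferMatrix_smul hf (n - N) N
  have hnext := cocycleProd_transferMatrix_smul hf n N
  rw [(periodic_cocycleProd hper N).sub_eq] at hprev
  set A := cocycleProd (transferMatrix α β) n N
  set v := ![f (n - N), f (n - N - 1)]
  rw [sub_add_cancel] at hprev
  have hCH : A • ![f n, f (n - 1)] + A.det • v = A.trace • ![f n, f (n - 1)] := by
    rw [← hprev, ← mul_smul, ← smul_assoc, ← mul_self_add_det_smul_one, add_smul, smul_assoc,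
      one_smul]
  rw [hnext, hdet, htrace] at hCH
  simpa [v] using congrFun hCH 0

end TransferMatrix

section Discriminant

variable {R : Type*} [CommRing R]

lemma coeff_trace_eq_trace_coeff_matPolyEquiv {n : Type*} [Fintype n] [DecidableEq n]
    (A : Matrix n n R[X]) (k : ℕ) : A.trace.coeff k = ((matPolyEquiv A).coeff k).trace := by
  simp [Matrix.trace, matPolyEquiv_coeff_apply]

/-- The trace of the monodromy matrix, as a polynomial in the energy `X`, of the recurrence
`f (n + 1) = (1 + r n) X f n - r n f (n - 1)` over `N` sites. -/
noncomputable def discriminant (r : ℤ → R) (N : ℕ) : R[X] :=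
  (cocycleProd (transferMatrix (fun n => C (1 + r n) * X) (fun n => C (r n))) 0 N).trace

lemma natDegree_matPolyEquiv_transferMatrix_le (c b : ℤ → R) (n : ℤ) :
    (matPolyEquiv (transferMatrix (fun n => C (c n) * X) (fun n => C (b n)) n)).natDegree ≤ 1 := by
  refine natDegree_le_iff_coeff_eq_zero.2 fun k hk => ?_
  ext i j
  rw [matPolyEquiv_coeff_apply]
  fin_cases i <;> fin_cases j <;>
    simp [transferMatrix, coeff_X, coeff_one, coeff_C, hk.ne, (zero_lt_one.trans hk).ne']

lemma coeff_one_matPolyEquiv_transferMatrix (c b : ℤ → R) (n : ℤ) :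
    (matPolyEquiv (transferMatrix (fun n => C (c n) * X) (fun n => C (b n)) n)).coeff 1 =
      Matrix.single 0 0 (c n) := by
  ext i j
  rw [matPolyEquiv_coeff_apply]
  fin_cases i <;> fin_cases j <;> simp [transferMatrix, coeff_one, coeff_C]

lemma cocycleProd_single {n : Type*} [Fintype n] [DecidableEq n] (c : ℤ → R) (i : n) (m : ℤ)
    {j : ℕ} (hj : j ≠ 0) :
    cocycleProd (fun k => Matrix.single i i (c k)) m j =
      Matrix.single i i (∏ k ∈ Finset.range j, c (m + k)) := by
  induction j, Nat.one_le_iff_ne_zero.2 hj using Nat.le_induction with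
  | base => simp [cocycleProd]
  | succ j hpos ih =>
    rw [cocycleProd, ih (Nat.one_le_iff_ne_zero.1 hpos), Matrix.single_mul_single_same, mul_comm,
      Finset.prod_range_succ]

lemma degree_discriminant_le (r : ℤ → R) (N : ℕ) : (discriminant r N).degree ≤ N := by
  refine (degree_le_iff_coeff_zero _ _).2 fun k hk => ?_
  have hdeg := natDegree_cocycleProd_le
    (natDegree_matPolyEquiv_transferMatrix_le (fun n => 1 + r n) r) 0 N
  rw [one_mul, ← map_cocycleProd] at hdeg
  rw [discriminant, coeff_trace_eq_trace_coeff_matPolyEquiv,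
    coeff_eq_zero_of_natDegree_lt (hdeg.trans_lt (Nat.cast_lt.1 hk)), Matrix.trace_zero]

lemma coeff_discriminant (r : ℤ → R) {N : ℕ} (hN : N ≠ 0) :
    (discriminant r N).coeff N = ∏ i ∈ Finset.range N, (1 + r i) := by
  have hcoeff := coeff_cocycleProd
    (natDegree_matPolyEquiv_transferMatrix_le (fun n => 1 + r n) r) 0 N
  simp_rw [one_mul, ← map_cocycleProd, coeff_one_matPolyEquiv_transferMatrix,
    cocycleProd_single _ _ _ hN, zero_add] at hcoeff
  rw [discriminant, coeff_trace_eq_trace_coeff_matPolyEquiv, hcoeff, Matrix.trace_single_eq_same]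

end Discriminant

lemma four_pow_card_mul_prod_lt_sq_prod_one_add {ι K : Type*} [Field K] [LinearOrder K]
    [IsStrictOrderedRing K] {s : Finset ι} {b : ι → K} (hb : ∀ i ∈ s, 0 < b i)
    (hne : ∃ i ∈ s, b i ≠ 1) : 4 ^ s.card * ∏ i ∈ s, b i < (∏ i ∈ s, (1 + b i)) ^ 2 := by
  obtain ⟨i, hi, hbi⟩ := hne
  rw [← Finset.prod_const, ← Finset.prod_mul_distrib, ← Finset.prod_pow]
  refine Finset.prod_lt_prod (fun j hj => mul_pos four_pos (hb j hj))
    (fun j _ => ?_) ⟨i, hi, ?_⟩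
  · linarith [sq_nonneg (b j - 1)]
  · linarith [sq_pos_of_ne_zero (sub_ne_zero.2 hbi)]

lemma exists_two_lt_abs_eval {D : ℝ[X]} {N : ℕ} (hN : N ≠ 0) (hdeg : D.degree ≤ N)
    (hcoeff : 2 ^ N < D.coeff N) : ∃ x ∈ Icc (-1 : ℝ) 1, 2 < |D.eval x| := by
  by_contra! hD
  have hhalf : (C (1 / 2) * D).coeff N ≤ 2 ^ (N - 1) :=
    Polynomial.Chebyshev.coeff_le_of_forall_abs_le_one
      ((degree_C_mul (by norm_num)).trans_le hdeg) fun x hx => by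
        rw [eval_C_mul, abs_mul, abs_of_pos one_half_pos]
        linarith [hD x hx]
  rw [coeff_C_mul] at hhalf
  linarith [pow_sub_one_mul hN (2 : ℝ)]

lemma exists_gap_of_isClosed {X : Type*} [ConditionallyCompleteLinearOrder X] [TopologicalSpace X]
    [OrderTopology X] {S : Set X} (hS : IsClosed S) {a b x : X} (ha : a ∈ S) (hb : b ∈ S)
    (hx : x ∈ Icc a b) (hxS : x ∉ S) :
    ∃ α β : X, a ≤ α ∧ α < β ∧ β ≤ b ∧ α ∈ S ∧ β ∈ S ∧ ∀ y ∈ Ioo α β, y ∉ S := by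
  obtain ⟨α, ⟨hαS, haα, hαx⟩, hαmax⟩ := (isCompact_Icc.inter_left hS).exists_isGreatest
    (⟨a, ha, left_mem_Icc.2 hx.1⟩ : (S ∩ Icc a x).Nonempty)
  obtain ⟨β, ⟨hβS, hxβ, hβb⟩, hβmin⟩ := (isCompact_Icc.inter_left hS).exists_isLeast
    (⟨b, hb, right_mem_Icc.2 hx.2⟩ : (S ∩ Icc x b).Nonempty)
  have hαβ : α < β :=
    (hαx.lt_of_ne fun h => hxS (h ▸ hαS)).trans_le hxβ
  refine ⟨α, β, haα, hαβ, hβb, hαS, hβS, fun y hy hyS => ?_⟩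
  rcases le_total y x with hyx | hxy
  · exact hy.1.not_ge (hαmax ⟨hyS, haα.trans hy.1.le, hyx⟩)
  · exact hy.2.not_ge (hβmin ⟨hyS, hxy, hy.2.le.trans hβb⟩)

section Aeval

lemma norm_eval_le_norm_aeval_of_mem_spectrum {𝕜 E : Type*} [NontriviallyNormedField 𝕜]
    [NormedAddCommGroup E] [NormedSpace 𝕜 E] [CompleteSpace E] {A : E →L[𝕜] E} {x : 𝕜}
    (hx : x ∈ spectrum 𝕜 A) (D : 𝕜[X]) : ‖D.eval x‖ ≤ ‖aeval A D‖ :=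
  (spectrum.norm_le_norm_mul_of_mem (spectrum.subset_polynomial_aeval A D ⟨x, hx, rfl⟩)).trans
    (mul_le_of_le_one_right (norm_nonneg _) ContinuousLinearMap.norm_id_le)

lemma aeval_dualMap {R M : Type*} [CommSemiring R] [AddCommMonoid M] [Module R M]
    (f : Module.End R M) (D : R[X]) :
    aeval (f.dualMap : Module.End R (Module.Dual R M)) D = (aeval f D).dualMap := by
  have hpow (n : ℕ) : (f.dualMap : Module.End R (Module.Dual R M)) ^ n = (f ^ n).dualMap := by
    induction n with
    | zero => rfl
    | succ n ih => rw [pow_succ, ih, pow_succ']; rfl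
  induction D using Polynomial.induction_on' with
  | add D₁ D₂ h₁ h₂ =>
    ext φ x
    simp [h₁, h₂]
  | monomial n a =>
    ext φ x
    simp [aeval_monomial, hpow]

lemma aeval_toLinearMap {R M : Type*} [CommRing R] [AddCommGroup M] [Module R M]
    [TopologicalSpace M] [IsTopologicalAddGroup M] [ContinuousConstSMul R M] (A : M →L[R] M)
    (D : R[X]) : aeval (A : M →ₗ[R] M) D = (aeval A D : M →L[R] M) := by
  induction D using Polynomial.induction_on' with
  | add D₁ D₂ h₁ h₂ => simp [h₁, h₂]
  | monomial n a =>
    ext x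
    simp [aeval_monomial, ← ContinuousLinearMap.toLinearMap_pow]

end Aeval

section Reindex

variable {ι κ F : Type*} [NormedAddCommGroup F] {q : ENNReal}

lemma memℓp_comp_equiv {f : κ → F} (hf : Memℓp f q) (e : ι ≃ κ) : Memℓp (fun i => f (e i)) q := by
  rcases q.trichotomy with rfl | rfl | hq
  · exact memℓp_zero (hf.finite_dsupport.preimage e.injective.injOn)
  · exact memℓp_infty (by simpa only [← e.surjective.range_comp] using! hf.bddAbove)
  · exact (memℓp_gen_iff hq).2 (e.summable_iff.2 (hf.summable hq))

/-- The element `u ∘ e` of `ℓ^q`, which is a translate of `u` when `e` is a translation of `ℤ`. -/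
def lpReindex (e : ι ≃ κ) (u : lp (fun _ : κ => F) q) : lp (fun _ : ι => F) q :=
  ⟨fun i => u (e i), memℓp_comp_equiv (lp.memℓp u) e⟩

lemma lpReindex_apply (e : ι ≃ κ) (u : lp (fun _ : κ => F) q) (i : ι) :
    lpReindex e u i = u (e i) := rfl

lemma norm_lpReindex (e : ι ≃ κ) (u : lp (fun _ : κ => F) q) : ‖lpReindex e u‖ = ‖u‖ := by
  rcases q.trichotomy with rfl | rfl | hq
  · rw [lp.norm_eq_card_dsupport, lp.norm_eq_card_dsupport, ← Set.ncard_eq_toFinset_card _ _,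
      ← Set.ncard_eq_toFinset_card _ _,
      ← Set.ncard_preimage_of_injective_subset_range e.injective
        ((subset_univ _).trans e.range_eq_univ.ge)]
    rfl
  · exact e.iSup_comp (g := fun k => ‖u k‖)
  · simp_rw [lp.norm_eq_tsum_rpow hq, lpReindex_apply, e.tsum_eq fun k => ‖u k‖ ^ q.toReal]

end Reindex

lemma bddAbove_range_of_periodic {α : Type*} [Preorder α] [IsDirectedOrder α] {f : ℤ → α} {N : ℕ}
    (hN : N ≠ 0) (hf : Function.Periodic f N) : BddAbove (range f) := by
  have : Nonempty α := ⟨f 0⟩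
  refine (((Set.finite_Ico (0 : ℤ) N).image f).subset ?_).bddAbove
  rintro _ ⟨n, rfl⟩
  obtain ⟨m, hm, hnm⟩ := hf.exists_mem_Ico₀ (by omega) n
  exact ⟨m, hm, hnm.symm⟩

section Network

variable {K : Type*} [Field K]

/-- The current through the edge from `n` to `n + 1` of the network on `ℤ` with conductances `w`
and voltages `v`, up to sign. -/
def edgeCurrent (w v : ℤ → K) (n : ℤ) : K := w n * (v (n + 1) - v n)

/-- The ratio of the conductances to the left and to the right of `n`, which is the determinant of
the transfer matrix of the walk at `n`. -/
noncomputable def conductanceRatio (w : ℤ → K) (n : ℤ) : K := w (n - 1) / w n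

variable {w : ℤ → K}

lemma periodic_conductanceRatio {c : ℤ} (hper : Function.Periodic w c) :
    Function.Periodic (conductanceRatio w) c := fun n => by
  rw [conductanceRatio, hper, add_sub_right_comm, hper, conductanceRatio]

lemma prod_conductanceRatio (hw : ∀ n, w n ≠ 0) (N : ℕ) :
    ∏ i ∈ Finset.range N, conductanceRatio w i = w (-1) / w (N - 1) := by
  induction N with
  | zero => simp [hw]
  | succ N ih =>
    rw [Finset.prod_range_succ, ih, conductanceRatio, div_mul_div_cancel₀ (hw _), Nat.cast_succ,
      add_sub_cancel_right]

lemma prod_conductanceRatio_period (hw : ∀ n, w n ≠ 0) {N : ℕ} (hper : Function.Periodic w N) :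
    ∏ i ∈ Finset.range N, conductanceRatio w i = 1 := by
  rw [prod_conductanceRatio hw, sub_eq_neg_add, hper, div_self (hw _)]

variable [LinearOrder K] [IsStrictOrderedRing K]

lemma conductanceRatio_pos (hw : ∀ n, 0 < w n) (n : ℤ) : 0 < conductanceRatio w n :=
  div_pos (hw _) (hw _)

lemma two_pow_lt_coeff_discriminant (hw : ∀ n, 0 < w n) {N : ℕ} (hN : N ≠ 0)
    (hper : Function.Periodic w N) (hne : ∃ n, w (n + 1) ≠ w n) :
    2 ^ N < (discriminant (conductanceRatio w) N).coeff N := by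
  have hratio : ∃ i ∈ Finset.range N, conductanceRatio w i ≠ 1 := by
    obtain ⟨n, hn⟩ := hne
    obtain ⟨m, ⟨hm₀, hmN⟩, hnm⟩ :=
      (periodic_conductanceRatio hper).exists_mem_Ico₀ (by omega) (n + 1)
    lift m to ℕ using hm₀
    refine ⟨m, Finset.mem_range.2 (Nat.cast_lt.1 hmN), ?_⟩
    rw [← hnm, conductanceRatio, add_sub_cancel_right, Ne, div_eq_one_iff_eq (hw _).ne']
    exact hn.symm
  have hAMGM := four_pow_card_mul_prod_lt_sq_prod_one_add
    (fun i _ => conductanceRatio_pos hw (i : ℕ)) hratio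
  rw [prod_conductanceRatio_period (fun n => (hw n).ne') hper, Finset.card_range, mul_one]
    at hAMGM
  rw [coeff_discriminant _ hN]
  refine lt_of_pow_lt_pow_left₀ 2
    (Finset.prod_nonneg fun i _ => (add_pos one_pos (conductanceRatio_pos hw i)).le) ?_
  rwa [← pow_mul, mul_comm, pow_mul, show (2 : K) ^ 2 = 4 by norm_num]

lemma eq_zero_of_forall_mul_sub_eq [Archimedean K] {v w : ℕ → K} {B W c : K} (hw : ∀ k, 0 < w k)
    (hwW : ∀ k, w k ≤ W) (hv : ∀ k, |v k| ≤ B) (hc : ∀ k, w k * (v (k + 1) - v k) = c) :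
    c = 0 := by
  by_contra hne
  have hW : 0 < W := (hw 0).trans_le (hwW 0)
  have hstep (k : ℕ) : c ^ 2 / W ≤ c * v (k + 1) - c * v k :=
    calc c ^ 2 / W ≤ c ^ 2 / w k := div_le_div_of_nonneg_left (sq_nonneg c) (hw k) (hwW k)
      _ = c * v (k + 1) - c * v k := by
        rw [div_eq_iff (hw k).ne']
        linear_combination -c * hc k
  have hsum (k : ℕ) : k * (c ^ 2 / W) ≤ |c| * B + |c| * B :=
    calc k * (c ^ 2 / W) = ∑ _i ∈ Finset.range k, c ^ 2 / W := by simp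
      _ ≤ ∑ i ∈ Finset.range k, (c * v (i + 1) - c * v i) := Finset.sum_le_sum fun i _ => hstep i
      _ = c * v k - c * v 0 := Finset.sum_range_sub (fun i => c * v i) k
      _ ≤ |c * v k| + |c * v 0| := (le_abs_self _).trans (abs_sub _ _)
      _ ≤ |c| * B + |c| * B := by
        rw [abs_mul, abs_mul]
        gcongr <;> exact hv _
  obtain ⟨k, hk⟩ := exists_nat_gt ((|c| * B + |c| * B) / (c ^ 2 / W))
  rw [div_lt_iff₀ (by positivity)] at hk
  exact (hsum k).not_gt hk

/-- Both half-lines have infinite resistance, so a bounded voltage drives no current into them and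
a single source at the origin is impossible. -/
lemma edgeCurrent_zero_eq_of_forall_ne [Archimedean K] {v : ℤ → K} {B : K} (hw : ∀ n, 0 < w n)
    (hbdd : BddAbove (range w)) (hv : ∀ n, |v n| ≤ B)
    (hflow : ∀ n ≠ 0, edgeCurrent w v n = edgeCurrent w v (n - 1)) :
    edgeCurrent w v 0 = edgeCurrent w v (-1) := by
  obtain ⟨W, hW⟩ := hbdd
  have hwW (n : ℤ) : w n ≤ W := hW (mem_range_self n)
  have hright (k : ℕ) : edgeCurrent w v k = edgeCurrent w v 0 := by
    induction k with
    | zero => rfl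
    | succ k ih => rw [hflow _ (by omega), ← ih, Nat.cast_succ, add_sub_cancel_right]
  have hleft (k : ℕ) : edgeCurrent w v (-1 - k) = edgeCurrent w v (-1) := by
    induction k with
    | zero => simp
    | succ k ih => rw [Nat.cast_succ, ← sub_sub, ← hflow _ (by omega), ih]
  have hright_zero : edgeCurrent w v 0 = 0 :=
    eq_zero_of_forall_mul_sub_eq (v := fun k => v k) (fun k => hw k) (fun k => hwW k)
      (fun k => hv k) hright
  have hleft_zero : -edgeCurrent w v (-1) = 0 :=
    eq_zero_of_forall_mul_sub_eq (v := fun k => v (-k)) (fun k => hw (-1 - k))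
      (fun k => hwW (-1 - k)) (fun k => hv (-k)) fun k => by
        rw [← hleft k, edgeCurrent]
        push_cast
        ring_nf
  rw [hright_zero, neg_eq_zero.1 hleft_zero]

end Network

section Walk

variable {q : ENNReal} [Fact (1 ≤ q)] {w : ℤ → ℝ}
  {P : lp (fun _ : ℤ => ℝ) q →L[ℝ] lp (fun _ : ℤ => ℝ) q}

/-- `P` is the transition operator on `ℓ^q(ℤ)` of the nearest-neighbour random walk on `ℤ` whose
edge from `n` to `n + 1` has conductance `w n`. -/
def IsWalkOperator (w : ℤ → ℝ)
    (P : lp (fun _ : ℤ => ℝ) q →L[ℝ] lp (fun _ : ℤ => ℝ) q) : Prop :=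
  ∀ (u : lp (fun _ : ℤ => ℝ) q) (n : ℤ),
    P u n = w n / (w n + w (n - 1)) * u (n + 1) + w (n - 1) / (w n + w (n - 1)) * u (n - 1)

lemma IsWalkOperator.apply_add_one (hw : ∀ n, 0 < w n) (hP : IsWalkOperator w P)
    (u : lp (fun _ : ℤ => ℝ) q) (n : ℤ) :
    u (n + 1) =
      (1 + conductanceRatio w n) * P u n - conductanceRatio w n * u (n - 1) := by
  have hn := (hw n).ne'
  have hsum := (add_pos (hw n) (hw (n - 1))).ne'
  rw [hP u n, conductanceRatio]
  field_simp
  ring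

/-- The coordinate functionals satisfy the transfer recurrence in which the energy acts as the
transpose of `P`. -/
lemma IsWalkOperator.aeval_discriminant (hw : ∀ n, 0 < w n) {N : ℕ}
    (hper : Function.Periodic w N) (hP : IsWalkOperator w P) (u : lp (fun _ : ℤ => ℝ) q) :
    aeval P (discriminant (conductanceRatio w) N) u =
      lpReindex (Equiv.addRight (N : ℤ)) u + lpReindex (Equiv.subRight (N : ℤ)) u := by
  let T : Module.End ℝ (Module.Dual ℝ (lp (fun _ : ℤ => ℝ) q)) := (P : _ →ₗ[ℝ] _).dualMap
  let coord (n : ℤ) : Module.Dual ℝ (lp (fun _ : ℤ => ℝ) q) := lp.evalₗ (fun _ : ℤ => ℝ) q n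
  have hcoord (n : ℤ) :
      coord (n + 1) =
        (1 + conductanceRatio w n) • T (coord n) - conductanceRatio w n • coord (n - 1) := by
    ext u
    exact hP.apply_add_one hw u n
  have hrec (n : ℤ) : Module.AEval'.of T (coord (n + 1)) =
      (C (1 + conductanceRatio w n) * X : ℝ[X]) • Module.AEval'.of T (coord n) -
        (C (conductanceRatio w n) : ℝ[X]) • Module.AEval'.of T (coord (n - 1)) := by
    rw [hcoord, map_sub, map_smul, map_smul, mul_smul, Module.AEval'.X_smul_of, Module.AEval.C_smul,
      Module.AEval.C_smul]
  have hratio := periodic_conductanceRatio hper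
  have hperiod (n : ℤ) : coord (n + N) + coord (n - N) =
      aeval T (discriminant (conductanceRatio w) N) (coord n) := by
    have hN := recurrence_add_period (f := fun n => Module.AEval'.of T (coord n))
      (hratio.comp fun x => (C (1 + x) * X : ℝ[X])) (hratio.comp fun x => (C x : ℝ[X])) hrec n
    simp only [Function.comp_apply] at hN
    rw [← map_prod, prod_conductanceRatio_period (fun n => (hw n).ne') hper, C_1, one_smul,
      ← map_add] at hN
    exact (Module.AEval'.of T).injective hN
  ext n
  have hn := LinearMap.congr_fun (hperiod n) u
  rw [aeval_dualMap, aeval_toLinearMap] at hn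
  exact hn.symm

lemma IsWalkOperator.norm_aeval_discriminant_le (hw : ∀ n, 0 < w n) {N : ℕ}
    (hper : Function.Periodic w N) (hP : IsWalkOperator w P) :
    ‖aeval P (discriminant (conductanceRatio w) N)‖ ≤ 2 :=
  ContinuousLinearMap.opNorm_le_bound _ zero_le_two fun u => by
    rw [hP.aeval_discriminant hw hper]
    refine (norm_add_le _ _).trans_eq ?_
    rw [norm_lpReindex, norm_lpReindex, two_mul]

/-- The gauge transformation `u n ↦ s ^ n * u n` reduces the energy `s = ± 1` to the energy `1`,
where `P` is a discrete Laplacian. -/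
lemma IsWalkOperator.edgeCurrent_sub_edgeCurrent (hw : ∀ n, 0 < w n) (hP : IsWalkOperator w P)
    {s : ℝ} (hs : s ^ 2 = 1) (u : lp (fun _ : ℤ => ℝ) q) (n : ℤ) :
    edgeCurrent w (fun m => s ^ m * u m) n - edgeCurrent w (fun m => s ^ m * u m) (n - 1) =
      -((w n + w (n - 1)) * s ^ (n + 1) * (s • u - P u) n) := by
  have hs₀ : s ≠ 0 := by rintro rfl; norm_num at hs
  have hsum := (add_pos (hw n) (hw (n - 1))).ne'
  have hpred : s ^ (n - 1) = s ^ n * s := by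
    rw [zpow_sub_one₀ hs₀, inv_eq_of_mul_eq_one_left (by rw [← sq, hs])]
  have hwalk : (w n + w (n - 1)) * P u n = w n * u (n + 1) + w (n - 1) * u (n - 1) := by
    rw [hP u n]
    field_simp
  simp only [edgeCurrent, sub_add_cancel, lp.coeFn_sub, lp.coeFn_smul, Pi.sub_apply, Pi.smul_apply,
    smul_eq_mul, hpred, zpow_add_one₀ hs₀]
  linear_combination -(s ^ n * s) * hwalk + s ^ n * u n * (w n + w (n - 1)) * hs

lemma IsWalkOperator.mem_spectrum_of_sq_eq_one (hw : ∀ n, 0 < w n) (hbdd : BddAbove (range w))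
    (hP : IsWalkOperator w P) {s : ℝ} (hs : s ^ 2 = 1) : s ∈ spectrum ℝ P := by
  rw [spectrum.mem_iff, ContinuousLinearMap.isUnit_iff_bijective]
  rintro ⟨-, hsurj⟩
  obtain ⟨u, hu⟩ := hsurj (lp.single q 0 1)
  have hu : s • u - P u = lp.single q 0 1 := by
    simpa [Algebra.algebraMap_eq_smul_one] using hu
  have habs : |s| = 1 := by
    rwa [← pow_eq_one_iff_of_nonneg (abs_nonneg s) two_ne_zero, sq_abs]
  have hv (n : ℤ) : |s ^ n * u n| ≤ ‖u‖ := by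
    rw [abs_mul, abs_zpow, habs, _root_.one_zpow, one_mul]
    exact lp.norm_apply_le_norm (zero_lt_one.trans_le Fact.out).ne' u n
  have hdiv := hP.edgeCurrent_sub_edgeCurrent hw hs u
  have hflow := edgeCurrent_zero_eq_of_forall_ne hw hbdd hv fun n hn => by
    rw [← sub_eq_zero, hdiv, hu, lp.single_apply_ne _ _ _ hn, mul_zero, neg_zero]
  have hs₀ : s ≠ 0 := by
    rintro rfl
    norm_num at hs
  have hsum : w 0 + w (-1) ≠ 0 := (add_pos (hw _) (hw _)).ne'
  have hsource := hdiv 0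
  rw [hu, lp.single_apply_self, zero_sub, hflow, sub_self] at hsource
  simp [hsum, hs₀] at hsource

theorem statement11_general (hw : ∀ n, 0 < w n) {N : ℕ} (hN : N ≠ 0)
    (hper : Function.Periodic w N) (hne : ∃ n, w (n + 1) ≠ w n) (hP : IsWalkOperator w P) :
    ∃ α β : ℝ, -1 ≤ α ∧ α < β ∧ β ≤ 1 ∧
      α ∈ spectrum ℝ P ∧ β ∈ spectrum ℝ P ∧
      ∀ x ∈ Ioo α β, x ∉ spectrum ℝ P := by
  have hbdd : BddAbove (range w) := bddAbove_range_of_periodic hN hper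
  obtain ⟨x, hx, hDx⟩ := exists_two_lt_abs_eval hN (degree_discriminant_le _ _)
    (two_pow_lt_coeff_discriminant hw hN hper hne)
  have hxP : x ∉ spectrum ℝ P := fun hxP => hDx.not_ge <|
    (norm_eval_le_norm_aeval_of_mem_spectrum hxP _).trans (hP.norm_aeval_discriminant_le hw hper)
  exact exists_gap_of_isClosed (spectrum.isClosed P)
    (hP.mem_spectrum_of_sq_eq_one hw hbdd (by norm_num))
    (hP.mem_spectrum_of_sq_eq_one hw hbdd (by norm_num)) hx hxP

end Walk

lemma shift_iterate_apply (ω : ℤ → ℕ) (k : ℕ) (n : ℤ) : shift^[k] ω n = ω (n + k) := by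
  induction k generalizing n with
  | zero => simp
  | succ k ih => rw [Function.iterate_succ_apply', shift, ih, Nat.cast_succ, add_assoc, add_comm 1]

lemma periodic_of_shift_iterate_eq {ω : ℤ → ℕ} {k : ℕ} (h : shift^[k] ω = ω) :
    Function.Periodic ω k := fun n =>
  (shift_iterate_apply ω k n).symm.trans (congrFun h n)

/-- Let `p ∈ Ω` be a periodic point whose minimal period is greater than `1`
(i.e., `p` is periodic but not a fixed point of the shift).  Then the spectrum of
`H̃_p` has at least one open gap contained in `[−1,1]`: there are `−1 ≤ α < β ≤ 1`
with `α, β ∈ σ(H̃_p)` and `(α,β) ∩ σ(H̃_p) = ∅`. -/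
theorem statement11 (ℓ : ℕ) (hℓ : 1 < ℓ) (W : Set (ℕ × ℕ))
    (p : ℤ → ℕ) (hp : p ∈ SFT ℓ W)
    (hper : ∃ n : ℕ, 1 ≤ n ∧ shift^[n] p = p)
    (hnotfix : shift p ≠ p)
    (H : L2Z →L[ℝ] L2Z) (hH : IsJacobiOp p H) :
    ∃ α β : ℝ, -1 ≤ α ∧ α < β ∧ β ≤ 1 ∧
      α ∈ spectrum ℝ H ∧ β ∈ spectrum ℝ H ∧
      ∀ x ∈ Ioo α β, x ∉ spectrum ℝ H := by
  obtain ⟨N, hN, hpN⟩ := hper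
  obtain ⟨n, hn⟩ := Function.ne_iff.1 hnotfix
  exact statement11_general (fun n => Nat.cast_pos.2 (hp.1 n).1) (Nat.one_le_iff_ne_zero.1 hN)
    ((periodic_of_shift_iterate_eq hpN).comp Nat.cast) ⟨n, Nat.cast_injective.ne hn⟩ hH
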